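/- arXiv:1301.5482 — 3 statements merged into one kernel-verified Lean document; each statement's English description precedes it below -/
import Mathlib

section
/- For every nonzero linear code C ⊆ F_{q^m}^n, the minimum rank distance equals the first RGRW with respect to the zero subcode: d_R(C) = M_{R,1}(C,{0}). -/
open scoped BigOperators

noncomputable section

variable (q : ℕ) (Fq : Type*) {Fqm : Type*} [Field Fq] [Field Fqm] [Algebra Fq Fqm]

/-- `V = V^q`: the image of `V` under the coordinatewise `q`-th power map equals `V`
(membership in the family `Γ(F_{q^m}^n)`). -/
def IsGalClosed {n : ℕ} (V : Submodule Fqm (Fin n → Fqm)) : Prop :=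
  (fun v : Fin n → Fqm => fun i => v i ^ q) '' (V : Set (Fin n → Fqm)) =
    (V : Set (Fin n → Fqm))

/-- The `i`-th relative dimension/intersection profile (RDIP) of `C1` and `C2`. -/
noncomputable def RDIP {n : ℕ} (C1 C2 : Submodule Fqm (Fin n → Fqm)) (i : ℕ) : ℕ :=
  sSup {d : ℕ | ∃ V : Submodule Fqm (Fin n → Fqm), IsGalClosed q V ∧
    Module.finrank Fqm ↥V = i ∧
    d = Module.finrank Fqm ↥(C1 ⊓ V) - Module.finrank Fqm ↥(C2 ⊓ V)}

/-- The `i`-th relative generalized rank weight (RGRW) of `C1` and `C2`. -/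
noncomputable def RGRW {n : ℕ} (C1 C2 : Submodule Fqm (Fin n → Fqm)) (i : ℕ) : ℕ :=
  sInf {d : ℕ | ∃ V : Submodule Fqm (Fin n → Fqm), IsGalClosed q V ∧
    d = Module.finrank Fqm ↥V ∧
    i ≤ Module.finrank Fqm ↥(C1 ⊓ V) - Module.finrank Fqm ↥(C2 ⊓ V)}

/-- The rank weight `d_R(x,0)` of a vector: the `F_q`-dimension of the `F_q`-span of
its coordinates. -/
noncomputable def rankWeight {ι : Type*} (x : ι → Fqm) : ℕ :=
  Module.finrank Fq ↥(Submodule.span Fq (Set.range x))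

/-- The minimum rank distance of a (nonzero) linear code. -/
noncomputable def minRankDist {ι : Type*} (C : Submodule Fqm (ι → Fqm)) : ℕ :=
  sInf {d : ℕ | ∃ x, x ∈ C ∧ x ≠ 0 ∧ d = rankWeight Fq x}

/-- The dual code with respect to the standard bilinear form `⟨x,y⟩ = ∑ i, x i * y i`. -/
def dualCode {n : ℕ} (V : Submodule Fqm (Fin n → Fqm)) : Submodule Fqm (Fin n → Fqm) where
  carrier := {x | ∀ v ∈ V, ∑ i, x i * v i = 0}
  add_mem' := by
    intro a b ha hb v hv
    have h1 := ha v hv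
    have h2 := hb v hv
    simp only [Set.mem_setOf_eq] at *
    simp only [Pi.add_apply, add_mul]
    rw [Finset.sum_add_distrib, h1, h2, add_zero]
  zero_mem' := by
    intro v hv
    simp
  smul_mem' := by
    intro c x hx v hv
    have h := hx v hv
    simp only [Set.mem_setOf_eq] at *
    simp only [Pi.smul_apply, smul_eq_mul, mul_assoc]
    rw [← Finset.mul_sum, h, mul_zero]


lemma galClosed_of_span [Fintype Fq] [Fintype Fqm] (hq : Fintype.card Fq = q) {n : ℕ} {ι : Type*}
    (a : ι → Fin n → Fq) :
    IsGalClosed q (Submodule.span Fqm (Set.range fun j i => algebraMap Fq Fqm (a j i))) := by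
  subst hq
  unfold IsGalClosed
  set V := Submodule.span Fqm (Set.range fun j i => algebraMap Fq Fqm (a j i)) with hV
  let φ := FiniteField.frobeniusAlgHom Fq Fqm
  have hφ : ∀ y : Fqm, y ^ Fintype.card Fq = φ y := fun y => rfl
  simp only [hφ]
  have hsub : ∀ v ∈ V, (fun i => φ (v i)) ∈ V := by
    intro v hv
    induction hv using Submodule.span_induction with
    | mem x hx =>
      obtain ⟨j, rfl⟩ := hx
      simp only [AlgHom.commutes]
      exact Submodule.subset_span ⟨j, rfl⟩
    | zero => simp only [Pi.zero_apply, map_zero]; exact V.zero_mem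
    | add x y _ _ hx hy =>
      simp only [Pi.add_apply, map_add]; exact V.add_mem hx hy
    | smul c x _ hx =>
      simp only [Pi.smul_apply, smul_eq_mul, map_mul]; exact V.smul_mem (φ c) hx
  apply Set.eq_of_subset_of_ncard_le
  · rintro _ ⟨v, hv, rfl⟩
    exact hsub v hv
  · rw [Set.ncard_image_of_injective]
    intro v w h
    funext i
    exact φ.toRingHom.injective (congrFun h i)
  · exact Set.toFinite _

lemma exists_galClosed [Fintype Fq] [Fintype Fqm] (hq : Fintype.card Fq = q) {n : ℕ}
    (x : Fin n → Fqm) : ∃ V : Submodule Fqm (Fin n → Fqm), IsGalClosed q V ∧ x ∈ V ∧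
      Module.finrank Fqm V ≤ rankWeight Fq x := by
  let S := Submodule.span Fq (Set.range x)
  let b := Module.finBasis Fq S
  let y : Fin n → S := fun i => ⟨x i, Submodule.subset_span ⟨i, rfl⟩⟩
  refine ⟨_, galClosed_of_span q Fq hq (fun j i => b.repr (y i) j), ?_, ?_⟩
  · have : x = ∑ j, (b j : Fqm) • (fun i => algebraMap Fq Fqm (b.repr (y i) j)) := by
      funext i
      have h := congrArg (Subtype.val) (b.sum_repr (y i))
      simp only [Finset.sum_apply, Pi.smul_apply, smul_eq_mul]
      rw [AddSubmonoidClass.coe_finsetSum] at h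
      refine Eq.trans h.symm (Finset.sum_congr rfl fun j _ => ?_)
      rw [Submodule.coe_smul, Algebra.smul_def, mul_comm]
    refine (congrArg (· ∈ Submodule.span Fqm (Set.range
      fun j i => algebraMap Fq Fqm (b.repr (y i) j))) this).mpr ?_
    exact Submodule.sum_mem _ fun j _ => Submodule.smul_mem _ _ (Submodule.subset_span ⟨j, rfl⟩)
  · refine (finrank_range_le_card _).trans ?_
    simp [rankWeight, S]

lemma rankWeight_le [Fintype Fq] [Fintype Fqm] (hq : Fintype.card Fq = q) {n : ℕ}
    (V : Submodule Fqm (Fin n → Fqm)) (hV : IsGalClosed q V) (x : Fin n → Fqm) (hx : x ∈ V) :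
    rankWeight Fq x ≤ Module.finrank Fqm V := by
  subst hq
  let T : Set (Fin n → Fqm) := {v | v ∈ V ∧ ∃ a : Fin n → Fq, v = fun i => algebraMap Fq Fqm (a i)}
  have hpow : ∀ (k : ℕ), ∀ v ∈ V, (fun i => v i ^ (Fintype.card Fq ^ k)) ∈ V := by
    intro k
    induction k with
    | zero => intro v hv; simpa using hv
    | succ k ih =>
      intro v hv
      have h : (fun i => (v i ^ (Fintype.card Fq ^ k)) ^ Fintype.card Fq) ∈ (V : Set _) := by
        rw [← hV]
        exact ⟨_, ih v hv, rfl⟩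
      simpa [pow_succ, pow_mul] using h
  have htr : ∀ v ∈ V, (fun i => algebraMap Fq Fqm (Algebra.trace Fq Fqm (v i))) ∈ T := by
    intro v hv
    refine ⟨?_, _, rfl⟩
    have : (fun i => algebraMap Fq Fqm (Algebra.trace Fq Fqm (v i))) =
        ∑ k ∈ Finset.range (Module.finrank Fq Fqm), fun i => v i ^ (Fintype.card Fq ^ k) := by
      funext i
      rw [FiniteField.algebraMap_trace_eq_sum_pow, Finset.sum_apply, Nat.card_eq_fintype_card]
    rw [this]
    exact Submodule.sum_mem _ fun k _ => hpow k v hv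
  have hspan : Submodule.span Fqm T = V := by
    apply le_antisymm
    · exact Submodule.span_le.2 fun v hv => hv.1
    · intro v hv
      let b := Module.finBasis Fq Fqm
      have : v = ∑ j, (b.traceDual j) •
          (fun i => algebraMap Fq Fqm (Algebra.trace Fq Fqm ((b j • v) i))) := by
        funext i
        simp only [Finset.sum_apply, Pi.smul_apply, smul_eq_mul]
        conv_lhs => rw [← b.traceDual.sum_repr (v i)]
        refine Finset.sum_congr rfl fun j _ => ?_
        rw [Module.Basis.traceDual_repr_apply, Algebra.traceForm_apply, Algebra.smul_def, mul_comm,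
          mul_comm (v i)]
      rw [this]
      exact Submodule.sum_mem _ fun j _ => Submodule.smul_mem _ _
        (Submodule.subset_span (htr _ (V.smul_mem _ hv)))
  obtain ⟨f, hfT, hfs, -⟩ := Submodule.exists_fun_fin_finrank_span_eq Fqm T
  have hx' : x ∈ Submodule.span Fqm (Set.range f) := by rw [hfs, hspan]; exact hx
  obtain ⟨c, hc⟩ := (Submodule.mem_span_range_iff_exists_fun Fqm).1 hx'
  have hle : Submodule.span Fq (Set.range x) ≤ Submodule.span Fq (Set.range c) := by
    rw [Submodule.span_le]
    rintro _ ⟨i, rfl⟩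
    rw [← hc, Finset.sum_apply]
    refine Submodule.sum_mem _ fun j _ => ?_
    obtain ⟨a, ha⟩ := (hfT j).2
    have : (c j • f j) i = a i • c j := by
      rw [Pi.smul_apply, ha, smul_eq_mul, Algebra.smul_def, mul_comm]
    rw [this]
    exact Submodule.smul_mem _ _ (Submodule.subset_span ⟨j, rfl⟩)
  refine (Submodule.finrank_mono hle).trans ((finrank_range_le_card c).trans ?_)
  rw [Fintype.card_fin, hspan]

/-- For every nonzero linear code `C ⊆ F_{q^m}^n`, the minimum rank
distance equals the first RGRW with respect to the zero subcode:
`d_R(C) = M_{R,1}(C, {0})`. -/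
theorem stmt6 (m n : ℕ) [Fintype Fq] [Fintype Fqm]
    (hq : Fintype.card Fq = q) (hm : Module.finrank Fq Fqm = m)
    (C : Submodule Fqm (Fin n → Fqm)) (hC : C ≠ ⊥) :
    minRankDist Fq C = RGRW q C ⊥ 1 := by
  obtain ⟨x₀, hx₀, hx₀0⟩ := Submodule.exists_mem_ne_zero_of_ne_bot hC
  have key : ∀ x ∈ C, x ≠ 0 → ∃ d ≤ rankWeight Fq x, d ∈ {d : ℕ |
      ∃ V : Submodule Fqm (Fin n → Fqm), IsGalClosed q V ∧ d = Module.finrank Fqm ↥V ∧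
      1 ≤ Module.finrank Fqm ↥(C ⊓ V) -
        Module.finrank Fqm ↥((⊥ : Submodule Fqm (Fin n → Fqm)) ⊓ V)} := by
    intro x hx hx0
    obtain ⟨V, hV, hxV, hle⟩ := exists_galClosed q Fq hq x
    refine ⟨_, hle, V, hV, rfl, ?_⟩
    rw [bot_inf_eq, finrank_bot, Nat.sub_zero, Submodule.one_le_finrank_iff]
    intro h
    exact hx0 ((Submodule.eq_bot_iff _).1 h x ⟨hx, hxV⟩)
  unfold minRankDist RGRW
  apply le_antisymm
  · obtain ⟨d₀, -, hd₀⟩ := key x₀ hx₀ hx₀0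
    apply le_csInf ⟨d₀, hd₀⟩
    rintro d ⟨V, hV, rfl, h1⟩
    rw [bot_inf_eq, finrank_bot, Nat.sub_zero, Submodule.one_le_finrank_iff] at h1
    obtain ⟨x, hx, hx0⟩ := Submodule.exists_mem_ne_zero_of_ne_bot h1
    refine le_trans (Nat.sInf_le ?_) (rankWeight_le q Fq hq V hV x hx.2)
    exact ⟨x, hx.1, hx0, rfl⟩
  · refine le_csInf ⟨rankWeight Fq x₀, ⟨x₀, hx₀, hx₀0, rfl⟩⟩ ?_
    rintro d ⟨x, hx, hx0, rfl⟩
    obtain ⟨d, hd, hd'⟩ := key x hx hx0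
    exact (Nat.sInf_le hd').trans hd

end
end

section
/- Let m ≥ n, let C1 ⊆ F_{q^m}^n be an MRD code, and let C2 ⊊ C1 be a subcode. Then for every 0 ≤ μ ≤ n − dim C2, the μ-th RDIP is K_{R,μ}(C1,C2) = max(0, μ − n + dim C1). -/
open scoped BigOperators

noncomputable section

variable (q : ℕ) (Fq : Type*) {Fqm : Type*} [Field Fq] [Field Fqm] [Algebra Fq Fqm]

lemma aux_info {F : Type*} [Field F] {n : ℕ} (C : Submodule F (Fin n → F)) :
    ∃ S : Finset (Fin n), S.card + Module.finrank F C = n ∧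
      ∀ x ∈ C, (∀ i, i ∉ S → x i = 0) → x = 0 := by
  classical
  let v : Fin n → ((Fin n → F) ⧸ C) := fun i => C.mkQ (Pi.single i 1)
  have hv : Submodule.span F (Set.range v) = ⊤ := by
    have h1 : Set.range v = C.mkQ '' Set.range (fun i : Fin n => (Pi.single i 1 : Fin n → F)) := by
      rw [← Set.range_comp]; rfl
    rw [h1, ← Submodule.map_span]
    have h2 := (Pi.basisFun F (Fin n)).span_eq
    have h3 : (⇑(Pi.basisFun F (Fin n))) = fun i : Fin n => (Pi.single i 1 : Fin n → F) := by
      ext i; simp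
    rw [h3] at h2
    rw [h2, Submodule.map_top, Submodule.range_mkQ]
  obtain ⟨κ, a, ha, hspan, hli⟩ := exists_linearIndependent' F v
  haveI : Finite κ := Finite.of_injective a ha
  haveI := Fintype.ofFinite κ
  rw [hv] at hspan
  let b := Module.Basis.mk hli hspan.ge
  have hcard : Module.finrank F ((Fin n → F) ⧸ C) = Fintype.card κ :=
    Module.finrank_eq_card_basis b
  refine ⟨Finset.univ.image a, ?_, ?_⟩
  · rw [Finset.card_image_of_injective _ ha, Finset.card_univ, ← hcard,
      Submodule.finrank_quotient_add_finrank]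
    simp
  · intro x hx h0
    have hxs : x = ∑ k, x (a k) • (Pi.single (a k) 1 : Fin n → F) := by
      conv_lhs => rw [pi_eq_sum_univ' x]
      have : ∑ k, x (a k) • (Pi.single (a k) 1 : Fin n → F)
          = ∑ i ∈ Finset.univ.image a, x i • (Pi.single i 1 : Fin n → F) := by
        rw [Finset.sum_image (fun _ _ _ _ h => ha h)]
      rw [this]
      symm
      refine (Finset.sum_subset (Finset.subset_univ _) ?_).trans ?_
      · intro i _ hi
        rw [h0 i hi, zero_smul]
      · refine Finset.sum_congr rfl fun i _ => ?_
        congr 1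
    have hz : ∑ k, x (a k) • (v ∘ a) k = 0 := by
      have : C.mkQ x = 0 := by simpa using hx
      rw [hxs, map_sum] at this
      simpa [v] using this
    have hall := Fintype.linearIndependent_iff.1 hli _ hz
    rw [hxs]
    simp [hall]

lemma aux_fix (Fq : Type*) {Fqm : Type*} [Field Fq] [Field Fqm] [Algebra Fq Fqm] [Fintype Fq]
    (y : Fqm) (hy : y ^ Fintype.card Fq = y) : ∃ c : Fq, algebraMap Fq Fqm c = y := by
  classical
  have h1 : 1 < Fintype.card Fq := Fintype.one_lt_card
  let P : Polynomial Fqm := Polynomial.X ^ Fintype.card Fq - Polynomial.X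
  have hP : P ≠ 0 := FiniteField.X_pow_card_sub_X_ne_zero Fqm h1
  have hdeg : P.natDegree = Fintype.card Fq := FiniteField.X_pow_card_sub_X_natDegree_eq Fqm h1
  have hmem : ∀ z : Fqm, z ∈ P.roots.toFinset ↔ z ^ Fintype.card Fq = z := by
    intro z
    rw [Multiset.mem_toFinset, Polynomial.mem_roots hP]
    simp [P, sub_eq_zero]
  have hsub : Finset.univ.image (algebraMap Fq Fqm) ⊆ P.roots.toFinset := by
    intro z hz
    obtain ⟨c, -, rfl⟩ := Finset.mem_image.1 hz
    rw [hmem, ← map_pow, FiniteField.pow_card]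
  have hcard : P.roots.toFinset.card ≤ (Finset.univ.image (algebraMap Fq Fqm)).card := by
    rw [Finset.card_image_of_injective _ (algebraMap Fq Fqm).injective, Finset.card_univ, ← hdeg]
    exact (Multiset.toFinset_card_le _).trans (Polynomial.card_roots' P)
  have heq := Finset.eq_of_subset_of_card_le hsub hcard
  have hy' := (hmem y).2 hy
  rw [← heq] at hy'
  obtain ⟨c, -, hc⟩ := Finset.mem_image.1 hy'
  exact ⟨c, hc⟩

lemma aux_rank (q : ℕ) (Fq : Type*) {Fqm : Type*} [Field Fq] [Field Fqm] [Algebra Fq Fqm]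
    [Fintype Fq] (hq : Fintype.card Fq = q) {n : ℕ}
    (V : Submodule Fqm (Fin n → Fqm)) (hV : IsGalClosed q V) (S : Finset (Fin n))
    (hc : S.card + Module.finrank Fqm V = n)
    (hS : ∀ x ∈ V, (∀ i, i ∉ S → x i = 0) → x = 0)
    (T : Finset (Fin n)) (x : Fin n → Fqm) (hx : x ∈ V) (hT : ∀ i, i ∉ S → i ∉ T → x i = 0) :
    rankWeight Fq x ≤ T.card := by
  classical
  let r : V →ₗ[Fqm] ({i // i ∉ S} → Fqm) :=
    (LinearMap.funLeft Fqm Fqm (Subtype.val : {i // i ∉ S} → Fin n)).comp V.subtype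
  have hr : ∀ (y : V) (i : {i // i ∉ S}), r y i = y.1 i.1 := fun _ _ => rfl
  have hinj : Function.Injective r := by
    rw [injective_iff_map_eq_zero]
    intro y hy
    apply Subtype.ext
    exact hS y.1 y.2 fun i hi => by rw [← hr y ⟨i, hi⟩, hy]; rfl
  have hdim : Module.finrank Fqm V = Module.finrank Fqm ({i // i ∉ S} → Fqm) := by
    rw [Module.finrank_fintype_fun_eq_card, Fintype.card_subtype_compl]
    simp
    omega
  have hsurj : Function.Surjective r :=
    (LinearMap.injective_iff_surjective_of_finrank_eq_finrank hdim).1 hinj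
  choose w hw using fun j : {i // i ∉ S} => hsurj (Pi.single j 1)
  have hq0 : q ≠ 0 := by rw [← hq]; exact Fintype.card_ne_zero
  have hwq : ∀ j i, (w j).1 i ^ q = (w j).1 i := by
    intro j
    have hmem : (fun i => (w j).1 i ^ q) ∈ V := by
      have : (fun i => (w j).1 i ^ q) ∈ (V : Set (Fin n → Fqm)) := by
        rw [← hV]
        exact ⟨(w j).1, (w j).2, rfl⟩
      exact this
    have : (⟨_, hmem⟩ : V) = w j := by
      apply hinj
      ext i
      rw [hr, hw]
      show (w j).1 i.1 ^ q = _
      rw [← hr (w j) i, hw, Pi.single_apply]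
      split_ifs <;> simp [hq0]
    intro i
    exact congrFun (congrArg Subtype.val this) i
  have hwF : ∀ j i, ∃ c : Fq, algebraMap Fq Fqm c = (w j).1 i := fun j i =>
    aux_fix Fq _ (by rw [hq]; exact hwq j i)
  choose c hcc using hwF
  have hxw : (⟨x, hx⟩ : V) = ∑ j, x j.1 • w j := by
    apply hinj
    rw [map_sum]
    simp only [map_smul, hw]
    ext i
    rw [hr]
    simp [Finset.sum_apply, Pi.single_apply]
  have hle : Submodule.span Fq (Set.range x) ≤
      Submodule.span Fq ((T.image x : Finset Fqm) : Set Fqm) := by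
    rw [Submodule.span_le]
    rintro _ ⟨i, rfl⟩
    have hxi : x i = ∑ j : {i // i ∉ S}, c j i • x j.1 := by
      have := congrFun (congrArg Subtype.val hxw) i
      simp only [AddSubmonoidClass.coe_finset_sum, Finset.sum_apply, Submodule.coe_smul,
        Pi.smul_apply, smul_eq_mul] at this
      rw [this]
      refine Finset.sum_congr rfl fun j _ => ?_
      rw [Algebra.smul_def, hcc, mul_comm]
    rw [hxi]
    refine Submodule.sum_mem _ fun j _ => Submodule.smul_mem _ _ ?_
    by_cases hj : j.1 ∈ T
    · exact Submodule.subset_span (by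
        simp only [Finset.coe_image]; exact ⟨j.1, hj, rfl⟩)
    · rw [hT j.1 j.2 hj]; exact Submodule.zero_mem _
  haveI : FiniteDimensional Fq (Submodule.span Fq ((T.image x : Finset Fqm) : Set Fqm)) :=
    FiniteDimensional.span_finset _ _
  unfold rankWeight
  exact (Submodule.finrank_mono hle).trans ((finrank_span_finset_le_card _).trans
    Finset.card_image_le)

lemma aux_upper (q : ℕ) (Fq : Type*) {Fqm : Type*} [Field Fq] [Field Fqm] [Algebra Fq Fqm]
    [Fintype Fq] (hq : Fintype.card Fq = q) {n : ℕ}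
    (V C : Submodule Fqm (Fin n → Fqm)) (hV : IsGalClosed q V) (d : ℕ)
    (hd : d < minRankDist Fq C) :
    Module.finrank Fqm ↥(C ⊓ V) ≤ Module.finrank Fqm V - d := by
  classical
  obtain ⟨S, hc, hS⟩ := aux_info V
  have hSc : Sᶜ.card = Module.finrank Fqm V := by
    rw [Finset.card_compl, Fintype.card_fin]; omega
  obtain ⟨T, hTS, hTc⟩ := Finset.exists_subset_card_eq
    (show min d (Module.finrank Fqm V) ≤ Sᶜ.card by rw [hSc]; exact min_le_right _ _)
  let U : Finset (Fin n) := Sᶜ \ T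
  let r : ↥(C ⊓ V) →ₗ[Fqm] (U → Fqm) :=
    (LinearMap.funLeft Fqm Fqm (Subtype.val : U → Fin n)).comp (C ⊓ V).subtype
  have hinj : Function.Injective r := by
    rw [injective_iff_map_eq_zero]
    intro y hy
    have hw : rankWeight Fq y.1 ≤ T.card := by
      refine aux_rank q Fq hq V hV S hc hS T y.1 y.2.2 fun i hi hiT => ?_
      have : i ∈ U := by simp [U, hi, hiT]
      exact congrFun hy ⟨i, this⟩
    by_contra hne
    have hmin : minRankDist Fq C ≤ rankWeight Fq y.1 :=
      Nat.sInf_le ⟨y.1, y.2.1, fun h => hne (Subtype.ext h), rfl⟩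
    omega
  have := LinearMap.finrank_le_finrank_of_injective hinj
  rw [Module.finrank_fintype_fun_eq_card, Fintype.card_coe, Finset.card_sdiff_of_subset hTS] at this
  omega

def coordSub (F : Type*) [Field F] {n : ℕ} (T : Finset (Fin n)) : Submodule F (Fin n → F) where
  carrier := {x | ∀ i, i ∉ T → x i = 0}
  add_mem' := by
    intro a b ha hb i hi
    simp [ha i hi, hb i hi]
  zero_mem' := by intro i _; rfl
  smul_mem' := by
    intro c x hx i hi
    simp [hx i hi]

lemma coordSub_finrank (F : Type*) [Field F] {n : ℕ} (T : Finset (Fin n)) :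
    Module.finrank F (coordSub F T) = T.card := by
  classical
  let e : coordSub F T ≃ₗ[F] (T → F) :=
    { toFun := fun x i => x.1 i.1
      map_add' := fun _ _ => rfl
      map_smul' := fun _ _ => rfl
      invFun := fun y => ⟨fun i => if h : i ∈ T then y ⟨i, h⟩ else 0, fun i hi => by simp [hi]⟩
      left_inv := fun x => by
        apply Subtype.ext
        ext i
        by_cases h : i ∈ T
        · simp [h]
        · simp [h, x.2 i h]
      right_inv := fun y => by
        ext i
        simp }
  rw [e.finrank_eq]
  simp

lemma coordSub_gal (q : ℕ) {F : Type*} [Field F] (hs : Function.Surjective fun y : F => y ^ q)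
    (hq0 : q ≠ 0) {n : ℕ} (T : Finset (Fin n)) : IsGalClosed q (coordSub F T) := by
  ext x
  constructor
  · rintro ⟨y, hy, rfl⟩ i hi
    simp [hy i hi, hq0]
  · intro hx
    choose g hg using hs
    refine ⟨fun i => g (x i), fun i hi => ?_, funext fun i => hg _⟩
    have := hg (x i)
    simp only [hx i hi] at this
    simpa [hx i hi, hq0] using this

/-- Let `m ≥ n`, `C1 ⊆ F_{q^m}^n` an MRD code and `C2 ⊊ C1` a subcode.
Then for every `0 ≤ μ ≤ n - dim C2`, `K_{R,μ}(C1,C2) = max(0, μ - n + dim C1)`. -/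
theorem stmt11 (m n : ℕ) [Fintype Fq] [Fintype Fqm]
    (hq : Fintype.card Fq = q) (hm : Module.finrank Fq Fqm = m) (hmn : n ≤ m)
    (C1 C2 : Submodule Fqm (Fin n → Fqm)) (hC : C1 ≠ ⊥)
    (hMRD : minRankDist Fq C1 = n - Module.finrank Fqm ↥C1 + 1)
    (h12 : C2 < C1) :
    ∀ μ, μ ≤ n - Module.finrank Fqm ↥C2 →
      (RDIP q C1 C2 μ : ℤ) = max 0 ((μ : ℤ) - (n : ℤ) + (Module.finrank Fqm ↥C1 : ℤ)) := by
  classical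
  intro μ hμ
  have hk1 : Module.finrank Fqm C1 ≤ n := by
    simpa using Submodule.finrank_le C1
  have hq0 : q ≠ 0 := by rw [← hq]; exact Fintype.card_ne_zero
  have hup : ∀ d ∈ {d : ℕ | ∃ V : Submodule Fqm (Fin n → Fqm), IsGalClosed q V ∧
      Module.finrank Fqm ↥V = μ ∧
      d = Module.finrank Fqm ↥(C1 ⊓ V) - Module.finrank Fqm ↥(C2 ⊓ V)},
      d ≤ μ - (n - Module.finrank Fqm C1) := by
    rintro d ⟨V, hV, hVμ, rfl⟩
    have := aux_upper q Fq hq V C1 hV (n - Module.finrank Fqm C1) (by omega)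
    omega
  obtain ⟨S, hSc, hS⟩ := aux_info C2
  obtain ⟨T, hTS, hTc⟩ := Finset.exists_subset_card_eq (show μ ≤ S.card by omega)
  have hsurj : Function.Surjective fun y : Fqm => y ^ q := by
    have := (FiniteField.frobeniusAlgEquivOfAlgebraic Fq Fqm).surjective
    intro y
    obtain ⟨z, hz⟩ := this y
    refine ⟨z, ?_⟩
    rw [← hz, ← hq]
    simp
  have hgal := coordSub_gal q hsurj hq0 T
  have hbot : C2 ⊓ coordSub Fqm T = ⊥ := by
    rw [eq_bot_iff]
    rintro x ⟨hx1, hx2⟩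
    exact hS x hx1 fun i hi => hx2 i fun h => hi (hTS h)
  have hlow : Module.finrank Fqm ↥(C1 ⊓ coordSub Fqm T) ≤ RDIP q C1 C2 μ := by
    refine le_csSup ⟨_, hup⟩ ⟨coordSub Fqm T, hgal, ?_, ?_⟩
    · rw [coordSub_finrank, hTc]
    · rw [hbot, finrank_bot, Nat.sub_zero]
  have hRup : RDIP q C1 C2 μ ≤ μ - (n - Module.finrank Fqm C1) :=
    csSup_le ⟨_, coordSub Fqm T, hgal, by rw [coordSub_finrank, hTc], rfl⟩ hup
  have hdim := Submodule.finrank_sup_add_finrank_inf_eq C1 (coordSub Fqm T)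
  have hsup : Module.finrank Fqm ↥(C1 ⊔ coordSub Fqm T) ≤ n := by
    simpa using Submodule.finrank_le (C1 ⊔ coordSub Fqm T)
  rw [coordSub_finrank, hTc] at hdim
  omega

end
end

section
/- Let C1 ⊆ F_{q^m}^n be a linear code and C2 ⊊ C1 a subcode with dim C2 = dim C1 − l. Equip Ω = C1 with the uniform probability measure, let X : Ω → F_{q^m}^n be the identity map, and let S : Ω → C1/C2 be the quotient map x ↦ x + C2. Then for every 0 ≤ μ ≤ n, the maximum amount of information leakage over all matrices over the base field satisfies max over B ∈ F_q^{μ×n} of I(S ; X B^T) = K_{R,μ}(C2^⊥, C1^⊥) · m · log q, where mutual information is in nats. -/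
open scoped BigOperators

noncomputable section

variable (q : ℕ) (Fq : Type*) {Fqm : Type*} [Field Fq] [Field Fqm] [Algebra Fq Fqm]

/-- Shannon entropy (in nats) of a random variable `f` on a finite probability
space `Ω` equipped with the uniform measure:
`H(f) = - ∑_a P(f = a) log P(f = a) = - ∑_ω (1/|Ω|) log P(f = f ω)`. -/
noncomputable def unifEntropy {Ω : Type*} [Fintype Ω] {α : Type*} (f : Ω → α) : ℝ := by
  classical
  exact - ∑ ω : Ω, (1 / (Fintype.card Ω : ℝ)) *
      Real.log (((Finset.univ.filter fun ω' => f ω' = f ω).card : ℝ) /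
        (Fintype.card Ω : ℝ))

/-- Mutual information (in nats) `I(f;g) = H(f) + H(g) - H(f,g)` of two random
variables on a finite probability space with the uniform measure. -/
noncomputable def unifMutualInfo {Ω : Type*} [Fintype Ω] {α β : Type*}
    (f : Ω → α) (g : Ω → β) : ℝ :=
  unifEntropy f + unifEntropy g - unifEntropy fun ω => (f ω, g ω)

/-! ### Entropy of a linear map -/

lemma unifEntropy_of_linear {K M N : Type*} [Field K] [AddCommGroup M] [Module K M]
    [AddCommGroup N] [Module K N] [Fintype M] (f : M →ₗ[K] N) :
    unifEntropy (fun x => f x) =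
      Real.log (Nat.card M) - Real.log (Nat.card (LinearMap.ker f)) := by
  classical
  unfold unifEntropy
  have hfib : ∀ x : M, (Finset.univ.filter fun y => f y = f x).card =
      Nat.card (LinearMap.ker f) := by
    intro x
    rw [← Fintype.card_subtype, ← Nat.card_eq_fintype_card]
    refine Nat.card_congr
      { toFun := fun y => ⟨y.1 - x, by simp [y.2]⟩
        invFun := fun z => ⟨z.1 + x, by simp⟩
        left_inv := fun y => by simp
        right_inv := fun z => by simp }
  have hM : (0 : ℝ) < Nat.card M := by exact_mod_cast Nat.card_pos
  have hk : (0 : ℝ) < Nat.card (LinearMap.ker f) := by exact_mod_cast Nat.card_pos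
  have : ∀ x : M, (((@Finset.filter M (fun y => f y = f x)
      (fun a => Classical.propDecidable _) Finset.univ).card : ℕ) : ℝ)
      = (Nat.card (LinearMap.ker f) : ℝ) := by
    intro x
    rw [← hfib x]
  simp only [this]
  rw [Finset.sum_const, Finset.card_univ, ← Nat.card_eq_fintype_card, nsmul_eq_mul, ← mul_assoc,
    mul_one_div_cancel hM.ne', one_mul, Real.log_div hk.ne' hM.ne']
  ring

/-! ### Duality -/

lemma dualCode_anti {n : ℕ} {A B : Submodule Fqm (Fin n → Fqm)} (h : A ≤ B) :
    dualCode B ≤ dualCode A := fun _ hx v hv => hx v (h hv)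

lemma finrank_dualCode {n : ℕ} (A : Submodule Fqm (Fin n → Fqm)) :
    Module.finrank Fqm (dualCode A) + Module.finrank Fqm A = n := by
  let F : (Fin n → Fqm) →ₗ[Fqm] Module.Dual Fqm (Fin n → Fqm) :=
    dotProductBilin Fqm Fqm
  have hF : Function.Injective F := by
    rw [injective_iff_map_eq_zero]
    intro x hx
    ext i
    have := congrArg (fun g => g (Pi.single i 1)) hx
    simpa [F, dotProductBilin] using this
  let e := LinearEquiv.ofInjectiveOfFinrankEq F hF (by simp [Subspace.dual_finrank_eq])
  have he : dualCode A = A.dualAnnihilator.comap e.toLinearMap := by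
    ext x
    simp [Submodule.mem_dualAnnihilator, dualCode, e, F, dotProductBilin, dotProduct]
  rw [he]
  have h1 : Module.finrank Fqm (A.dualAnnihilator.comap e.toLinearMap) =
      Module.finrank Fqm A.dualAnnihilator := by
    rw [show A.dualAnnihilator.comap e.toLinearMap = A.dualAnnihilator.map e.symm.toLinearMap from
      (Submodule.map_equiv_eq_comap_symm e.symm _).symm]
    exact LinearEquiv.finrank_map_eq e.symm _
  rw [h1]
  have := Subspace.finrank_add_finrank_dualAnnihilator_eq A
  simp at this
  omega

lemma dualCode_dualCode {n : ℕ} (A : Submodule Fqm (Fin n → Fqm)) :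
    dualCode (dualCode A) = A := by
  symm
  apply Submodule.eq_of_le_of_finrank_eq
  · intro x hx v hv
    rw [← hv x hx]
    exact Finset.sum_congr rfl fun i _ => mul_comm _ _
  · have := finrank_dualCode A
    have := finrank_dualCode (dualCode A)
    omega

lemma dualCode_sup {n : ℕ} (A B : Submodule Fqm (Fin n → Fqm)) :
    dualCode (A ⊔ B) = dualCode A ⊓ dualCode B := by
  apply le_antisymm
  · exact le_inf (dualCode_anti le_sup_left) (dualCode_anti le_sup_right)
  · rintro x ⟨ha, hb⟩ v hv
    obtain ⟨a, h1, b, h2, rfl⟩ := Submodule.mem_sup.1 hv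
    simp [mul_add, Finset.sum_add_distrib, ha a h1, hb b h2]

lemma finrank_inf_dualCode {n : ℕ} (C U : Submodule Fqm (Fin n → Fqm)) :
    Module.finrank Fqm ↥(C ⊓ dualCode U) + Module.finrank Fqm U =
      Module.finrank Fqm C + Module.finrank Fqm ↥(dualCode C ⊓ U) := by
  have h := dualCode_sup (dualCode C) U
  rw [dualCode_dualCode] at h
  rw [← h]
  have h1 := finrank_dualCode (dualCode C ⊔ U)
  have h2 := finrank_dualCode C
  have h3 := Submodule.finrank_sup_add_finrank_inf_eq (dualCode C) U
  omega

lemma relDim_mono {n : ℕ} {D1 D2 U V : Submodule Fqm (Fin n → Fqm)} (hD : D2 ≤ D1)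
    (hU : U ≤ V) :
    Module.finrank Fqm ↥(D1 ⊓ U) - Module.finrank Fqm ↥(D2 ⊓ U) ≤
      Module.finrank Fqm ↥(D1 ⊓ V) - Module.finrank Fqm ↥(D2 ⊓ V) := by
  have h3 := Submodule.finrank_sup_add_finrank_inf_eq (D1 ⊓ U) (D2 ⊓ V)
  have h4 : (D1 ⊓ U) ⊓ (D2 ⊓ V) = D2 ⊓ U := by
    apply le_antisymm
    · rintro x ⟨⟨_, h⟩, h', _⟩; exact ⟨h', h⟩
    · rintro x ⟨h, h'⟩; exact ⟨⟨hD h, h'⟩, h, hU h'⟩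
  have h5 : (D1 ⊓ U) ⊔ (D2 ⊓ V) ≤ D1 ⊓ V :=
    sup_le (inf_le_inf_left _ hU) (inf_le_inf_right _ hD)
  have h6 := Submodule.finrank_mono h5
  rw [h4] at h3
  omega

/-! ### Galois descent -/

/-- coordinatewise embedding of base-field vectors -/
def emb (n : ℕ) : (Fin n → Fq) →ₗ[Fq] (Fin n → Fqm) where
  toFun w i := algebraMap Fq Fqm (w i)
  map_add' _ _ := by ext; simp
  map_smul' _ _ := by ext; simp [Algebra.smul_def]

lemma linearIndependent_emb {ι : Type*} {n : ℕ} {w : ι → Fin n → Fq}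
    (hw : LinearIndependent Fq w) :
    LinearIndependent Fqm (fun j => emb Fq (Fqm := Fqm) n (w j)) := by
  rw [linearIndependent_iff'] at hw ⊢
  intro s c hc j hj
  rw [← Module.forall_dual_apply_eq_zero_iff Fq]
  intro φ
  refine hw s (fun j => φ (c j)) ?_ j hj
  ext i
  have := congrArg φ (congrFun hc i)
  simp only [Finset.sum_apply, Pi.smul_apply, smul_eq_mul, emb, LinearMap.coe_mk, AddHom.coe_mk,
    map_sum, Pi.zero_apply, map_zero] at this ⊢
  rw [← this]
  refine Finset.sum_congr rfl fun k _ => ?_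
  rw [mul_comm (c k), ← Algebra.smul_def, map_smul, smul_eq_mul, mul_comm]

lemma exists_submodule_finrank_eq {K V : Type*} [Field K] [AddCommGroup V] [Module K V]
    [FiniteDimensional K V] (W : Submodule K V) (k : ℕ) (h1 : Module.finrank K W ≤ k)
    (h2 : k ≤ Module.finrank K V) : ∃ W' : Submodule K V, W ≤ W' ∧ Module.finrank K W' = k := by
  induction k, h1 using Nat.le_induction with
  | base => exact ⟨W, le_rfl, rfl⟩
  | succ k _ ih =>
    obtain ⟨W', hle, hk⟩ := ih (by omega)
    have : W' ≠ ⊤ := by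
      rintro rfl
      rw [finrank_top] at hk
      omega
    obtain ⟨v, hv⟩ : ∃ v, v ∉ W' := by
      by_contra! h
      exact this (eq_top_iff.2 fun x _ => h x)
    refine ⟨W' ⊔ Submodule.span K {v}, hle.trans le_sup_left, ?_⟩
    have h3 := Submodule.finrank_sup_add_finrank_inf_eq W' (Submodule.span K {v})
    have hv0 : v ≠ 0 := by rintro rfl; exact hv W'.zero_mem
    have h4 : W' ⊓ Submodule.span K {v} = ⊥ :=
      ((Submodule.disjoint_span_singleton' hv0).2 hv).eq_bot
    rw [h4, finrank_span_singleton hv0, finrank_bot] at h3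
    omega

section descent

variable [Fintype Fq] [Fintype Fqm]

lemma isGalClosed_span {n : ℕ} (hq : Fintype.card Fq = q) (s : Set (Fin n → Fq)) :
    IsGalClosed q (Submodule.span Fqm (emb Fq (Fqm := Fqm) n '' s)) := by
  let σ : Fqm ≃ₐ[Fq] Fqm := FiniteField.frobeniusAlgEquivOfAlgebraic Fq Fqm
  have hσ : ∀ x, σ x = x ^ q := fun x => by
    rw [← hq]; simp [σ, FiniteField.coe_frobeniusAlgEquivOfAlgebraic]
  have key : ∀ τ : Fqm ≃ₐ[Fq] Fqm, ∀ v ∈ Submodule.span Fqm (emb Fq (Fqm := Fqm) n '' s),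
      (fun i => τ (v i)) ∈ Submodule.span Fqm (emb Fq (Fqm := Fqm) n '' s) := by
    intro τ v hv
    induction hv using Submodule.span_induction with
    | mem x hx =>
      obtain ⟨w, hw, rfl⟩ := hx
      have : (fun i => τ (emb Fq (Fqm := Fqm) n w i)) = emb Fq (Fqm := Fqm) n w := by
        ext i; simp [emb]
      rw [this]
      exact Submodule.subset_span ⟨w, hw, rfl⟩
    | zero => simp only [Pi.zero_apply, map_zero]; exact Submodule.zero_mem _
    | add x y _ _ hx hy =>
      convert Submodule.add_mem _ hx hy using 1
      ext i; simp
    | smul a x _ hx =>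
      convert Submodule.smul_mem _ (τ a) hx using 1
      ext i; simp
  apply Set.Subset.antisymm
  · rintro _ ⟨v, hv, rfl⟩
    have := key σ v hv
    simp only [hσ] at this
    exact this
  · intro v hv
    refine ⟨_, key σ.symm v hv, ?_⟩
    ext i
    simp only [← hσ]
    simp

lemma span_emb_of_isGalClosed {n : ℕ} (hq : Fintype.card Fq = q)
    (V : Submodule Fqm (Fin n → Fqm)) (hV : IsGalClosed q V) :
    Submodule.span Fqm (emb Fq (Fqm := Fqm) n ''
      ((V.restrictScalars Fq).comap (emb Fq n) : Set (Fin n → Fq))) = V := by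
  apply le_antisymm
  · rw [Submodule.span_le]
    rintro _ ⟨w, hw, rfl⟩
    exact hw
  · intro v hv
    have hpow : ∀ (k : ℕ), ∀ u ∈ V, (fun i => u i ^ q ^ k) ∈ V := by
      intro k
      induction k with
      | zero => intro u hu; simpa using hu
      | succ k ih =>
        intro u hu
        have h1 := ih u hu
        have : (fun i => (u i ^ q ^ k) ^ q) ∈ (V : Set (Fin n → Fqm)) := by
          rw [← hV]; exact ⟨_, h1, rfl⟩
        simp only [pow_succ, pow_mul]
        exact this
    have hfin : FiniteDimensional Fq Fqm := Module.Finite.of_finite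
    let tr : Fqm → (Fin n → Fq) := fun c i => Algebra.trace Fq Fqm (v i * c)
    have htr : ∀ c, emb Fq n (tr c) ∈ V := by
      intro c
      have : emb Fq (Fqm := Fqm) n (tr c) =
          ∑ k ∈ Finset.range (Module.finrank Fq Fqm), (fun i => (c • v) i ^ q ^ k) := by
        ext i
        simp only [emb, LinearMap.coe_mk, AddHom.coe_mk, tr,
          FiniteField.algebraMap_trace_eq_sum_pow, Finset.sum_apply, Pi.smul_apply, smul_eq_mul,
          Nat.card_eq_fintype_card, hq, mul_comm c]
      rw [this]
      exact Submodule.sum_mem _ fun k _ => hpow k _ (V.smul_mem c hv)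
    let b := Module.finBasis Fq Fqm
    let d := (Algebra.traceForm Fq Fqm).dualBasis (traceForm_nondegenerate Fq Fqm) b
    have hv' : v = ∑ k, d k • emb Fq (Fqm := Fqm) n (tr (b k)) := by
      ext i
      conv_lhs => rw [← d.sum_repr (v i)]
      simp only [Finset.sum_apply, Pi.smul_apply, smul_eq_mul]
      refine Finset.sum_congr rfl fun k _ => ?_
      rw [LinearMap.BilinForm.dualBasis_repr_apply, Algebra.smul_def, mul_comm]
      rfl
    rw [hv']
    exact Submodule.sum_mem _ fun k _ => Submodule.smul_mem _ _
      (Submodule.subset_span ⟨_, htr _, rfl⟩)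

lemma finrank_span_emb {n : ℕ} (W : Submodule Fq (Fin n → Fq)) :
    Module.finrank Fqm (Submodule.span Fqm (emb Fq (Fqm := Fqm) n '' (W : Set (Fin n → Fq)))) =
      Module.finrank Fq W ∧
    ∃ B : Fin (Module.finrank Fq W) → Fin n → Fq,
      Submodule.span Fqm (emb Fq (Fqm := Fqm) n '' (W : Set (Fin n → Fq))) =
      Submodule.span Fqm (Set.range fun j => emb Fq (Fqm := Fqm) n (B j)) := by
  let b := Module.finBasis Fq W
  let B : Fin (Module.finrank Fq W) → Fin n → Fq := fun j => (b j : Fin n → Fq)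
  have hB : LinearIndependent Fq B :=
    b.linearIndependent.map' W.subtype (Submodule.ker_subtype W)
  have hspan : Submodule.span Fqm (emb Fq (Fqm := Fqm) n '' (W : Set (Fin n → Fq))) =
      Submodule.span Fqm (Set.range fun j => emb Fq (Fqm := Fqm) n (B j)) := by
    apply le_antisymm
    · rw [Submodule.span_le]
      rintro _ ⟨w, hw, rfl⟩
      have h1 : w = ∑ j, b.repr ⟨w, hw⟩ j • B j := by
        have := congrArg W.subtype (b.sum_repr ⟨w, hw⟩)
        rw [map_sum] at this
        exact this.symm
      rw [h1, map_sum]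
      refine Submodule.sum_mem _ fun j _ => ?_
      rw [map_smul, ← algebraMap_smul Fqm]
      exact Submodule.smul_mem _ _ (Submodule.subset_span ⟨j, rfl⟩)
    · rw [Submodule.span_le]
      rintro _ ⟨j, rfl⟩
      exact Submodule.subset_span ⟨_, (b j).2, rfl⟩
  refine ⟨?_, B, hspan⟩
  rw [hspan, finrank_span_eq_card (linearIndependent_emb Fq hB), Fintype.card_fin]

end descent

/-! ### The mutual information for a fixed matrix -/

lemma mutualInfo_eq {n μ : ℕ} [Fintype Fq] [Fintype Fqm]
    (C1 C2 : Submodule Fqm (Fin n → Fqm)) [Fintype ↥C1] (h12 : C2 < C1)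
    (B : Fin μ → Fin n → Fq) (U : Submodule Fqm (Fin n → Fqm))
    (hU : U = Submodule.span Fqm (Set.range fun j => emb Fq (Fqm := Fqm) n (B j))) :
    unifMutualInfo
      (fun x : ↥C1 => (Submodule.Quotient.mk x : ↥C1 ⧸ C2.comap C1.subtype))
      (fun x : ↥C1 => fun j : Fin μ =>
        ∑ i, (x : Fin n → Fqm) i * algebraMap Fq Fqm (B j i)) =
    ((Module.finrank Fqm ↥(dualCode C2 ⊓ U) - Module.finrank Fqm ↥(dualCode C1 ⊓ U) : ℕ) : ℝ) *
      Real.log (Fintype.card Fqm) := by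
  classical
  let f := (C2.comap C1.subtype).mkQ
  let g : C1 →ₗ[Fqm] (Fin μ → Fqm) :=
    LinearMap.pi fun j =>
      ((dotProductBilin Fqm Fqm).flip (emb Fq (Fqm := Fqm) n (B j))).comp C1.subtype
  have hg : (fun x : ↥C1 => fun j : Fin μ =>
        ∑ i, (x : Fin n → Fqm) i * algebraMap Fq Fqm (B j i)) = fun x => g x := by
    ext x j
    simp [g, dotProductBilin, dotProduct, emb]
  have hdU : ∀ x : Fin n → Fqm, x ∈ dualCode U ↔
      ∀ j, ∑ i, x i * algebraMap Fq Fqm (B j i) = 0 := by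
    intro x
    constructor
    · intro h j
      exact h _ (hU ▸ Submodule.subset_span ⟨j, rfl⟩)
    · intro h v hv
      rw [hU] at hv
      have : Submodule.span Fqm (Set.range fun j => emb Fq (Fqm := Fqm) n (B j)) ≤
          LinearMap.ker (dotProductBilin Fqm Fqm x) := by
        rw [Submodule.span_le]
        rintro _ ⟨j, rfl⟩
        exact h j
      exact this hv
  have kf : LinearMap.ker f = C2.comap C1.subtype := Submodule.ker_mkQ _
  have kg : LinearMap.ker g = (dualCode U).comap C1.subtype := by
    ext x
    rw [LinearMap.mem_ker, Submodule.mem_comap, hdU, ← show (fun j : Fin μ =>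
        ∑ i, (x : Fin n → Fqm) i * algebraMap Fq Fqm (B j i)) = g x from congrFun hg x,
      funext_iff]
    rfl
  have kfg : LinearMap.ker (f.prod g) = (C2 ⊓ dualCode U).comap C1.subtype := by
    rw [LinearMap.ker_prod, kf, kg]; rfl
  have hcard : ∀ D : Submodule Fqm (Fin n → Fqm), (Nat.card (D.comap C1.subtype) : ℝ) =
      (Fintype.card Fqm : ℝ) ^ (Module.finrank Fqm ↥(C1 ⊓ D)) := by
    intro D
    rw [Module.natCard_eq_pow_finrank (K := Fqm), ← Submodule.map_comap_subtype,
      Submodule.finrank_map_subtype_eq, Nat.card_eq_fintype_card]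
    push_cast
    rfl
  have hc1 : (Nat.card C1 : ℝ) = (Fintype.card Fqm : ℝ) ^ (Module.finrank Fqm C1) := by
    rw [Module.natCard_eq_pow_finrank (K := Fqm), Nat.card_eq_fintype_card]; push_cast; rfl
  unfold unifMutualInfo
  rw [hg]
  have e1 := unifEntropy_of_linear f
  have e2 := unifEntropy_of_linear g
  have e3 := unifEntropy_of_linear (f.prod g)
  rw [kf, hcard, hc1, Real.log_pow, Real.log_pow] at e1
  rw [kg, hcard, hc1, Real.log_pow, Real.log_pow] at e2
  rw [kfg, hcard, hc1, Real.log_pow, Real.log_pow] at e3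
  change unifEntropy (fun x => f x) + unifEntropy (fun x => g x) -
    unifEntropy (fun x => (f.prod g) x) = _
  rw [e1, e2, e3]
  have i1 := finrank_inf_dualCode C1 U
  have i2 := finrank_inf_dualCode C2 U
  have j1 : C1 ⊓ C2 = C2 := inf_eq_right.2 h12.le
  have j2 : C1 ⊓ (C2 ⊓ dualCode U) = C2 ⊓ dualCode U :=
    inf_eq_right.2 (inf_le_left.trans h12.le)
  have i3 : Module.finrank Fqm ↥(dualCode C1 ⊓ U) ≤ Module.finrank Fqm ↥(dualCode C2 ⊓ U) :=
    Submodule.finrank_mono (inf_le_inf_right _ (dualCode_anti h12.le))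
  rw [j1, j2, Nat.cast_sub i3]
  have i1' : (Module.finrank Fqm ↥(C1 ⊓ dualCode U) : ℝ) + Module.finrank Fqm U =
      Module.finrank Fqm C1 + Module.finrank Fqm ↥(dualCode C1 ⊓ U) := by exact_mod_cast i1
  have i2' : (Module.finrank Fqm ↥(C2 ⊓ dualCode U) : ℝ) + Module.finrank Fqm U =
      Module.finrank Fqm C2 + Module.finrank Fqm ↥(dualCode C2 ⊓ U) := by exact_mod_cast i2
  linear_combination (Real.log (Fintype.card Fqm)) * (i2' - i1')

/-- With `Ω = C1` uniform, `X` the identity and `S : C1 → C1/C2` the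
quotient map, for every `0 ≤ μ ≤ n` the maximum information leakage over all
matrices `B ∈ F_q^{μ×n}` over the base field satisfies
`max_B I(S ; X Bᵀ) = K_{R,μ}(C2^⊥, C1^⊥) · m · log q` (in nats). -/
theorem stmt14 (m n l μ : ℕ) [Fintype Fq] [Fintype Fqm]
    (hq : Fintype.card Fq = q) (hm : Module.finrank Fq Fqm = m)
    (C1 C2 : Submodule Fqm (Fin n → Fqm)) [Fintype ↥C1] (h12 : C2 < C1)
    (hl : Module.finrank Fqm ↥C1 = Module.finrank Fqm ↥C2 + l)
    (hμ : μ ≤ n) :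
    IsGreatest
      {r : ℝ | ∃ B : Fin μ → Fin n → Fq,
        r = unifMutualInfo
          (fun x : ↥C1 => (Submodule.Quotient.mk x : ↥C1 ⧸ C2.comap C1.subtype))
          (fun x : ↥C1 => fun j : Fin μ =>
            ∑ i, (x : Fin n → Fqm) i * algebraMap Fq Fqm (B j i))}
      ((RDIP q (dualCode C2) (dualCode C1) μ : ℝ) * ((m : ℝ) * Real.log (q : ℝ))) := by
  classical
  have hcard : (m : ℝ) * Real.log (q : ℝ) = Real.log (Fintype.card Fqm) := by
    rw [Module.card_eq_pow_finrank (K := Fq), hm, hq]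
    push_cast
    rw [Real.log_pow]
  have hD : dualCode C1 ≤ dualCode C2 := dualCode_anti h12.le
  rw [hcard]
  set T : Set ℕ := {d : ℕ | ∃ V : Submodule Fqm (Fin n → Fqm), IsGalClosed q V ∧
    Module.finrank Fqm ↥V = μ ∧
    d = Module.finrank Fqm ↥(dualCode C2 ⊓ V) - Module.finrank Fqm ↥(dualCode C1 ⊓ V)} with hT
  have hR : RDIP q (dualCode C2) (dualCode C1) μ = sSup T := rfl
  have hbdd : BddAbove T := by
    refine ⟨n, ?_⟩
    rintro _ ⟨V, -, -, rfl⟩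
    have := Submodule.finrank_le (dualCode C2 ⊓ V)
    simp at this
    omega
  have hext : ∀ W : Submodule Fq (Fin n → Fq), Module.finrank Fq W ≤ μ →
      ∃ V : Submodule Fqm (Fin n → Fqm), IsGalClosed q V ∧ Module.finrank Fqm V = μ ∧
        Submodule.span Fqm (emb Fq (Fqm := Fqm) n '' (W : Set (Fin n → Fq))) ≤ V := by
    intro W hW
    obtain ⟨W', hle, hk⟩ := exists_submodule_finrank_eq W μ hW (by simpa using hμ)
    exact ⟨_, isGalClosed_span q Fq hq _, (finrank_span_emb Fq W').1.trans hk,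
      Submodule.span_mono (Set.image_mono hle)⟩
  have hne : T.Nonempty := by
    obtain ⟨V, h1, h2, -⟩ := hext ⊥ (by simp)
    exact ⟨_, V, h1, h2, rfl⟩
  rw [hR]
  constructor
  · obtain ⟨V, h1, h2, h3⟩ := Nat.sSup_mem hne hbdd
    have hspan := span_emb_of_isGalClosed q Fq hq V h1
    obtain ⟨hr, B, hB⟩ := finrank_span_emb Fq (Fqm := Fqm)
      ((V.restrictScalars Fq).comap (emb Fq n))
    rw [hspan] at hr hB
    rw [h2] at hr
    rw [h3]
    generalize Module.finrank Fq ↥((V.restrictScalars Fq).comap (emb Fq n)) = k at hr B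
    subst hr
    exact ⟨B, (mutualInfo_eq Fq C1 C2 h12 B V hB).symm⟩
  · rintro _ ⟨B, rfl⟩
    rw [mutualInfo_eq Fq C1 C2 h12 B _ rfl]
    refine mul_le_mul_of_nonneg_right ?_ (Real.log_natCast_nonneg _)
    have hle : Module.finrank Fq (Submodule.span Fq (Set.range B)) ≤ μ := by
      have := finrank_range_le_card (R := Fq) B
      rw [Fintype.card_fin] at this
      exact this
    obtain ⟨V, h1, h2, h3⟩ := hext _ hle
    have hUV : Submodule.span Fqm (Set.range fun j => emb Fq (Fqm := Fqm) n (B j)) ≤ V := by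
      refine le_trans (Submodule.span_mono ?_) h3
      rintro _ ⟨j, rfl⟩
      exact ⟨_, Submodule.subset_span ⟨j, rfl⟩, rfl⟩
    exact_mod_cast (relDim_mono hD hUV).trans (le_csSup hbdd ⟨V, h1, h2, rfl⟩)

end
end
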